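/- arXiv:1911.00339 — 3 statements merged into one kernel-verified Lean document; each statement's English description precedes it below -/
import Mathlib

section
/- (Self-similar profiles give solutions of cNS) Let d ≥ 1, T > 0, and suppose P ∈ C¹((0,∞)) and U, Θ ∈ C²((0,∞)) solve the backward self-similar ODE system. Define, for 0 < t < T and x ∈ ℝ^d ∖ {0} with r = |x|: ρ(t,x) = P(r/√(T−t)), u(t,x) = (T−t)^{−1/2} U(r/√(T−t)) x/r, θ(t,x) = (T−t)^{−1} Θ(r/√(T−t)). Then (ρ, u, θ) satisfies the system (cNS) pointwise on (0,T)×(ℝ^d ∖ {0}). -/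
open Real Set Filter MeasureTheory

/-- Partial derivative in the `i`-th coordinate direction of a scalar field on
`ℝ^d`. -/
noncomputable def pd {d : ℕ} (i : Fin d) (g : EuclideanSpace ℝ (Fin d) → ℝ)
    (x : EuclideanSpace ℝ (Fin d)) : ℝ :=
  fderiv ℝ g x (EuclideanSpace.single i 1)

/-- The compressible Navier-Stokes equations (cNS) at a point `(t, x)`, for the
density `ρ`, velocity `u`, and temperature `θ`:
continuity, momentum (componentwise), and energy equations. -/
def CNSEqns (d : ℕ) (R CV κ μ lam : ℝ)
    (ρ : ℝ → EuclideanSpace ℝ (Fin d) → ℝ)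
    (u : ℝ → EuclideanSpace ℝ (Fin d) → EuclideanSpace ℝ (Fin d))
    (θ : ℝ → EuclideanSpace ℝ (Fin d) → ℝ)
    (t : ℝ) (x : EuclideanSpace ℝ (Fin d)) : Prop :=
  -- continuity equation
  (deriv (fun s => ρ s x) t + ∑ i, pd i (fun y => ρ t y * u t y i) x = 0)
  -- momentum equation, componentwise
  ∧ (∀ j : Fin d,
      deriv (fun s => ρ s x * u s x j) t
        + ∑ i, pd i (fun y => ρ t y * u t y i * u t y j) x
        + pd j (fun y => R * ρ t y * θ t y) x
      = (lam + μ) * pd j (fun y => ∑ i, pd i (fun z => u t z i) y) x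
        + μ * ∑ i, pd i (fun y => pd i (fun z => u t z j) y) x)
  -- energy equation
  ∧ (deriv (fun s => ρ s x * (‖u s x‖ ^ 2 / 2 + CV * θ s x)) t
      + ∑ i, pd i (fun y =>
          u t y i * (ρ t y * (‖u t y‖ ^ 2 / 2 + CV * θ t y) + R * ρ t y * θ t y)) x
      - κ * ∑ i, pd i (fun y => pd i (fun z => θ t z) y) x
      = ∑ i, pd i (fun y =>
          lam * (∑ k, pd k (fun z => u t z k) y) * u t y i
          + 2 * μ * ∑ j, ((pd i (fun z => u t z j) y
              + pd j (fun z => u t z i) y) / 2) * u t y j) x)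

/-- The backward self-similar ODE system for the compressible Navier-Stokes
equations, for scalar profiles `P, U, Θ : ℝ → ℝ` considered on `(0, ∞)`. -/
def BackwardODE (d : ℕ) (R CV κ μ lam : ℝ) (P U Θ : ℝ → ℝ) : Prop :=
  ∀ r : ℝ, 0 < r →
    ((1/2) * r * deriv P r + deriv P r * U r
        + P r * (deriv U r + ((d : ℝ) - 1) / r * U r) = 0)
    ∧ ((1/2) * (P r * U r)
        + (1/2) * r * deriv (fun s => P s * U s) r
        + deriv (fun s => P s * U s ^ 2) r
        + ((d : ℝ) - 1) / r * (P r * U r ^ 2)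
        + R * deriv (fun s => P s * Θ s) r
        = (2 * μ + lam) *
            (deriv (deriv U) r + ((d : ℝ) - 1) / r * deriv U r
              - ((d : ℝ) - 1) / r ^ 2 * U r))
    ∧ (P r * (U r ^ 2 / 2 + CV * Θ r)
        + (1/2) * r * deriv (fun s => P s * (U s ^ 2 / 2 + CV * Θ s)) r
        + deriv (fun s => U s * P s * (U s ^ 2 / 2 + CV * Θ s)
            + R * U s * P s * Θ s) r
        + ((d : ℝ) - 1) / r *
            (U r * P r * (U r ^ 2 / 2 + CV * Θ r) + R * U r * P r * Θ r)
        - κ * (deriv (deriv Θ) r + ((d : ℝ) - 1) / r * deriv Θ r)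
        = 2 * μ * ((deriv U r) ^ 2 + ((d : ℝ) - 1) / r ^ 2 * U r ^ 2)
          + lam * (deriv U r + ((d : ℝ) - 1) / r * U r) ^ 2
          + (2 * μ + lam) *
              (deriv (deriv U) r + ((d : ℝ) - 1) / r * deriv U r
                - ((d : ℝ) - 1) / r ^ 2 * U r) * U r)


lemma pd_congr' {d : ℕ} (i : Fin d) {f g : EuclideanSpace ℝ (Fin d) → ℝ}
    {x : EuclideanSpace ℝ (Fin d)} (hx : x ≠ 0) (h : ∀ y, y ≠ 0 → f y = g y) :
    pd i f x = pd i g x := by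
  unfold pd
  have : f =ᶠ[nhds x] g := by
    filter_upwards [isOpen_ne.mem_nhds hx] with y hy using h y hy
  rw [this.fderiv_eq]

lemma hasFDerivAt_coord {d : ℕ} (j : Fin d) (x : EuclideanSpace ℝ (Fin d)) :
    HasFDerivAt (fun y : EuclideanSpace ℝ (Fin d) => y j)
      (EuclideanSpace.proj j : EuclideanSpace ℝ (Fin d) →L[ℝ] ℝ) x :=
  (EuclideanSpace.proj j : EuclideanSpace ℝ (Fin d) →L[ℝ] ℝ).hasFDerivAt

lemma hasFDerivAt_radial {d : ℕ} {f : ℝ → ℝ} {f' : ℝ} {x : EuclideanSpace ℝ (Fin d)}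
    (hx : x ≠ 0) (hf : HasDerivAt f f' ‖x‖) :
    HasFDerivAt (fun y : EuclideanSpace ℝ (Fin d) => f ‖y‖)
      ((f' / ‖x‖) • innerSL ℝ x) x := by
  have hn : ‖x‖ ≠ 0 := norm_ne_zero_iff.2 hx
  have h1 := (hasStrictFDerivAt_norm_sq x).hasFDerivAt
  have h2 : HasFDerivAt (fun y : EuclideanSpace ℝ (Fin d) => ‖y‖)
      ((1 / (2 * ‖x‖)) • (2 • innerSL ℝ x)) x := by
    have h3 := h1.sqrt (by positivity)
    simpa [Real.sqrt_sq] using h3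
  have h4 := hf.comp_hasFDerivAt x h2
  refine h4.congr_fderiv ?_
  ext v
  simp
  field_simp

lemma pd_radial {d : ℕ} {f : ℝ → ℝ} {f' : ℝ} {x : EuclideanSpace ℝ (Fin d)} (i : Fin d)
    (hx : x ≠ 0) (hf : HasDerivAt f f' ‖x‖) :
    pd i (fun y => f ‖y‖) x = f' / ‖x‖ * x i := by
  unfold pd
  rw [(hasFDerivAt_radial hx hf).fderiv]
  simp [EuclideanSpace.inner_single_right]

lemma pd_radial_mul {d : ℕ} {f : ℝ → ℝ} {f' : ℝ} {x : EuclideanSpace ℝ (Fin d)} (i j : Fin d)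
    (hx : x ≠ 0) (hf : HasDerivAt f f' ‖x‖) :
    pd i (fun y => f ‖y‖ * y j) x
      = f' / ‖x‖ * x i * x j + f ‖x‖ * (if i = j then 1 else 0) := by
  unfold pd
  have hh : fderiv ℝ (fun y : EuclideanSpace ℝ (Fin d) => f ‖y‖ * y j) x = _ :=
    ((hasFDerivAt_radial hx hf).mul (hasFDerivAt_coord j x)).fderiv
  rw [hh]
  by_cases h : i = j
  · subst h
    simp [EuclideanSpace.inner_single_right]; ring
  · have h' : j ≠ i := fun e => h e.symm
    simp [EuclideanSpace.inner_single_right, h, h']; ring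

lemma pd_radial_mul_mul {d : ℕ} {f : ℝ → ℝ} {f' : ℝ} {x : EuclideanSpace ℝ (Fin d)}
    (i j : Fin d) (hx : x ≠ 0) (hf : HasDerivAt f f' ‖x‖) :
    pd i (fun y => f ‖y‖ * y i * y j) x
      = f' / ‖x‖ * x i * x i * x j + f ‖x‖ * x j
        + f ‖x‖ * x i * (if i = j then 1 else 0) := by
  unfold pd
  have hh : fderiv ℝ (fun y : EuclideanSpace ℝ (Fin d) => f ‖y‖ * y i * y j) x = _ :=
    (((hasFDerivAt_radial hx hf).mul (hasFDerivAt_coord i x)).mul (hasFDerivAt_coord j x)).fderiv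
  rw [hh]
  by_cases h : i = j
  · subst h
    simp [EuclideanSpace.inner_single_right]; ring
  · have h' : j ≠ i := fun e => h e.symm
    simp [EuclideanSpace.inner_single_right, h, h']; ring

lemma pd_radial_mul_mul_add {d : ℕ} {f g : ℝ → ℝ} {f' g' : ℝ} {x : EuclideanSpace ℝ (Fin d)}
    (i j : Fin d) (hx : x ≠ 0) (hf : HasDerivAt f f' ‖x‖) (hg : HasDerivAt g g' ‖x‖) (c : ℝ) :
    pd i (fun y => f ‖y‖ * y i * y j + g ‖y‖ * c) x
      = f' / ‖x‖ * x i * x i * x j + f ‖x‖ * x j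
        + f ‖x‖ * x i * (if i = j then 1 else 0) + g' / ‖x‖ * x i * c := by
  rw [← pd_radial_mul_mul i j hx hf, ← pd_radial i hx hg]
  unfold pd
  have hA : HasFDerivAt (fun y : EuclideanSpace ℝ (Fin d) => f ‖y‖ * y i * y j) _ x :=
    ((hasFDerivAt_radial hx hf).mul (hasFDerivAt_coord i x)).mul (hasFDerivAt_coord j x)
  have hB : fderiv ℝ (fun y : EuclideanSpace ℝ (Fin d) => f ‖y‖ * y i * y j + g ‖y‖ * c) x = _ :=
    (hA.add ((hasFDerivAt_radial hx hg).mul_const c)).fderiv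
  rw [hB, hA.fderiv, (hasFDerivAt_radial hx hg).fderiv]
  simp; ring

lemma sum_sq_coord {d : ℕ} (x : EuclideanSpace ℝ (Fin d)) : ∑ i, x i * x i = ‖x‖ ^ 2 := by
  rw [EuclideanSpace.norm_sq_eq]
  refine Finset.sum_congr rfl fun i _ => ?_
  rw [Real.norm_eq_abs, sq_abs, sq]

lemma div_radial {d : ℕ} {f : ℝ → ℝ} {f' : ℝ} {x : EuclideanSpace ℝ (Fin d)}
    (hx : x ≠ 0) (hf : HasDerivAt f f' ‖x‖) :
    ∑ i, pd i (fun y => f ‖y‖ * y i) x = f' * ‖x‖ + d * f ‖x‖ := by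
  have hn : ‖x‖ ≠ 0 := norm_ne_zero_iff.2 hx
  simp only [pd_radial_mul _ _ hx hf, if_true, mul_one, Finset.sum_add_distrib, mul_assoc,
    ← Finset.mul_sum, sum_sq_coord]
  simp
  field_simp

lemma div_tensor {d : ℕ} {f : ℝ → ℝ} {f' : ℝ} {x : EuclideanSpace ℝ (Fin d)} (j : Fin d)
    (hx : x ≠ 0) (hf : HasDerivAt f f' ‖x‖) :
    ∑ i, pd i (fun y => f ‖y‖ * y i * y j) x = (f' * ‖x‖ + (d + 1) * f ‖x‖) * x j := by
  have hn : ‖x‖ ≠ 0 := norm_ne_zero_iff.2 hx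
  have e : ∀ i, f' / ‖x‖ * x i * x i * x j = f' / ‖x‖ * x j * (x i * x i) := fun i => by ring
  simp only [pd_radial_mul_mul _ _ hx hf, Finset.sum_add_distrib, e,
    ← Finset.mul_sum, sum_sq_coord]
  simp
  field_simp
  ring

/-- Laplacian of the `j`-th component of the radial field `w(r) y`. -/
lemma lap_comp {d : ℕ} {w w1 : ℝ → ℝ} {w2 : ℝ} {x : EuclideanSpace ℝ (Fin d)} (j : Fin d)
    (hx : x ≠ 0) (hw : ∀ r, 0 < r → HasDerivAt w (w1 r) r) (hw1 : HasDerivAt w1 w2 ‖x‖) :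
    ∑ i, pd i (fun y => pd i (fun z => w ‖z‖ * z j) y) x
      = (w2 + (d + 1) * w1 ‖x‖ / ‖x‖) * x j := by
  have hr : 0 < ‖x‖ := norm_pos_iff.2 hx
  have hn : ‖x‖ ≠ 0 := hr.ne'
  have hm : HasDerivAt (fun r => w1 r / r) ((w2 * ‖x‖ - w1 ‖x‖ * 1) / ‖x‖ ^ 2) ‖x‖ :=
    hw1.div (hasDerivAt_id _) hn
  have e : ∀ i, pd i (fun y => pd i (fun z => w ‖z‖ * z j) y) x
      = pd i (fun y => (fun r => w1 r / r) ‖y‖ * y i * y j + w ‖y‖ * (if i = j then 1 else 0)) x :=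
    fun i => pd_congr' i hx fun y hy => pd_radial_mul i j hy (hw _ (norm_pos_iff.2 hy))
  have e2 : ∀ i (a : ℝ), a * x i * x i * x j = a * x j * (x i * x i) := fun i a => by ring
  simp only [e, pd_radial_mul_mul_add _ _ hx hm (hw _ hr), Finset.sum_add_distrib, e2,
    ← Finset.mul_sum, sum_sq_coord]
  simp
  field_simp
  ring

lemma lap_scalar {d : ℕ} {w w1 : ℝ → ℝ} {w2 : ℝ} {x : EuclideanSpace ℝ (Fin d)}
    (hx : x ≠ 0) (hw : ∀ r, 0 < r → HasDerivAt w (w1 r) r) (hw1 : HasDerivAt w1 w2 ‖x‖) :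
    ∑ i, pd i (fun y => pd i (fun z => w ‖z‖) y) x
      = w2 + (d - 1) * w1 ‖x‖ / ‖x‖ := by
  have hr : 0 < ‖x‖ := norm_pos_iff.2 hx
  have hn : ‖x‖ ≠ 0 := hr.ne'
  have hm : HasDerivAt (fun r => w1 r / r) ((w2 * ‖x‖ - w1 ‖x‖ * 1) / ‖x‖ ^ 2) ‖x‖ :=
    hw1.div (hasDerivAt_id _) hn
  have e : ∀ i, pd i (fun y => pd i (fun z => w ‖z‖) y) x
      = pd i (fun y => (fun r => w1 r / r) ‖y‖ * y i) x :=
    fun i => pd_congr' i hx fun y hy => pd_radial i hy (hw _ (norm_pos_iff.2 hy))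
  simp only [e]
  rw [div_radial hx hm]
  field_simp
  ring

lemma grad_div {d : ℕ} {w w1 : ℝ → ℝ} {w2 : ℝ} {x : EuclideanSpace ℝ (Fin d)} (j : Fin d)
    (hx : x ≠ 0) (hw : ∀ r, 0 < r → HasDerivAt w (w1 r) r) (hw1 : HasDerivAt w1 w2 ‖x‖) :
    pd j (fun y => ∑ i, pd i (fun z => w ‖z‖ * z i) y) x
      = (w2 + (d + 1) * w1 ‖x‖ / ‖x‖) * x j := by
  have hr : 0 < ‖x‖ := norm_pos_iff.2 hx
  have hn : ‖x‖ ≠ 0 := hr.ne'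
  have hm : HasDerivAt (fun r => w1 r * r + d * w r)
      ((w2 * ‖x‖ + w1 ‖x‖ * 1) + d * w1 ‖x‖) ‖x‖ :=
    (hw1.mul (hasDerivAt_id _)).add ((hw _ hr).const_mul _)
  rw [pd_congr' (g := fun y => (fun r => w1 r * r + d * w r) ‖y‖) j hx
    fun y hy => div_radial hy (hw _ (norm_pos_iff.2 hy)), pd_radial j hx hm]
  field_simp
  ring

lemma stress_div {d : ℕ} {w w1 : ℝ → ℝ} {w2 : ℝ} {x : EuclideanSpace ℝ (Fin d)} (lam μ : ℝ)
    (hx : x ≠ 0) (hw : ∀ r, 0 < r → HasDerivAt w (w1 r) r) (hw1 : HasDerivAt w1 w2 ‖x‖) :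
    ∑ i, pd i (fun y =>
          lam * (∑ k, pd k (fun z => w ‖z‖ * z k) y) * (w ‖y‖ * y i)
          + 2 * μ * ∑ j, ((pd i (fun z => w ‖z‖ * z j) y
              + pd j (fun z => w ‖z‖ * z i) y) / 2) * (w ‖y‖ * y j)) x
      = (lam * ((w2 * ‖x‖ + w1 ‖x‖ + d * w1 ‖x‖) * w ‖x‖
            + (w1 ‖x‖ * ‖x‖ + d * w ‖x‖) * w1 ‖x‖)
          + 2 * μ * ((w2 * ‖x‖ + w1 ‖x‖ + w1 ‖x‖) * w ‖x‖
            + (w1 ‖x‖ * ‖x‖ + w ‖x‖) * w1 ‖x‖)) * ‖x‖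
        + d * (lam * ((w1 ‖x‖ * ‖x‖ + d * w ‖x‖) * w ‖x‖)
          + 2 * μ * ((w1 ‖x‖ * ‖x‖ + w ‖x‖) * w ‖x‖)) := by
  have hr : 0 < ‖x‖ := norm_pos_iff.2 hx
  have hm : HasDerivAt (fun r => lam * ((w1 r * r + d * w r) * w r)
        + 2 * μ * ((w1 r * r + w r) * w r))
      (lam * ((w2 * ‖x‖ + w1 ‖x‖ * 1 + d * w1 ‖x‖) * w ‖x‖
            + (w1 ‖x‖ * ‖x‖ + d * w ‖x‖) * w1 ‖x‖)
          + 2 * μ * ((w2 * ‖x‖ + w1 ‖x‖ * 1 + w1 ‖x‖) * w ‖x‖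
            + (w1 ‖x‖ * ‖x‖ + w ‖x‖) * w1 ‖x‖)) ‖x‖ := by
    have h0 := hw _ hr
    have hi := hw1.mul (hasDerivAt_id ‖x‖)
    exact (((hi.add (h0.const_mul (d : ℝ))).mul h0).const_mul lam).add
      (((hi.add h0).mul h0).const_mul (2 * μ))
  have := div_radial hx hm
  simp only [mul_one] at this
  rw [← this]
  refine Finset.sum_congr rfl fun i _ => pd_congr' i hx fun y hy => ?_
  have hy' := hw _ (norm_pos_iff.2 hy)
  have hn : ‖y‖ ≠ 0 := norm_ne_zero_iff.2 hy
  rw [div_radial hy hy']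
  have e : ∀ j, ((pd i (fun z => w ‖z‖ * z j) y + pd j (fun z => w ‖z‖ * z i) y) / 2)
      * (w ‖y‖ * y j) = w1 ‖y‖ / ‖y‖ * w ‖y‖ * y i * (y j * y j)
        + w ‖y‖ * w ‖y‖ * (if i = j then y j else 0) := by
    intro j
    rw [pd_radial_mul _ _ hy hy', pd_radial_mul _ _ hy hy']
    by_cases h : i = j
    · subst h; simp; ring
    · have h' : j ≠ i := fun e => h e.symm
      simp [h, h']; ring
  simp only [e, Finset.sum_add_distrib, ← Finset.mul_sum, sum_sq_coord]
  simp
  field_simp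

lemma time_deriv {T t r : ℝ} (ht : t < T) {f : ℝ → ℝ} {f' : ℝ}
    (hf : HasDerivAt f f' (r / √(T - t))) :
    HasDerivAt (fun s => f (r / √(T - s))) (f' * (r / (2 * √(T - t) ^ 3))) t := by
  have hp : 0 < T - t := by linarith
  have hs : 0 < √(T - t) := Real.sqrt_pos.2 hp
  have h1 : HasDerivAt (fun s => T - s) (-1) t := by
    simpa using (hasDerivAt_id t).const_sub T
  have h2 := (h1.sqrt hp.ne').inv hs.ne'
  have h3 := h2.const_mul r
  have h4 : HasDerivAt (fun s => r / √(T - s)) (r / (2 * √(T - t) ^ 3)) t := by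
    refine h3.congr_deriv ?_
    field_simp
  exact hf.comp t h4

lemma time_deriv_inv {T t : ℝ} (ht : t < T) :
    HasDerivAt (fun s => (√(T - s))⁻¹) (1 / (2 * √(T - t) ^ 3)) t := by
  have hs : 0 < √(T - t) := Real.sqrt_pos.2 (by linarith)
  have := time_deriv (r := 1) ht (hasDerivAt_id _)
  simpa using this

lemma time_deriv_inv2 {T t : ℝ} (ht : t < T) :
    HasDerivAt (fun s => (T - s)⁻¹) (1 / (√(T - t) ^ 4)) t := by
  have hp : 0 < T - t := by linarith
  have h1 : HasDerivAt (fun s => T - s) (-1) t := by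
    simpa using (hasDerivAt_id t).const_sub T
  have h2 := h1.inv hp.ne'
  refine h2.congr_deriv ?_
  rw [show √(T - t) ^ 4 = (√(T - t) ^ 2) ^ 2 by ring, Real.sq_sqrt hp.le]
  simp

/-- (Self-similar profiles give solutions of cNS) -/
theorem selfsimilar_profiles_solve_cns
    (d : ℕ) (hd : 1 ≤ d) (T : ℝ) (hT : 0 < T) (R CV κ μ lam : ℝ)
    (hR : 0 < R) (hCV : 0 < CV) (hκ : 0 < κ) (hμ : 0 < μ)
    (hlam : 0 ≤ 2 * μ + d * lam)
    (P U Θ : ℝ → ℝ)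
    (hP : ContDiffOn ℝ 1 P (Ioi 0))
    (hU : ContDiffOn ℝ 2 U (Ioi 0))
    (hΘ : ContDiffOn ℝ 2 Θ (Ioi 0))
    (hODE : BackwardODE d R CV κ μ lam P U Θ) :
    ∀ t : ℝ, 0 < t → t < T → ∀ x : EuclideanSpace ℝ (Fin d), x ≠ 0 →
      CNSEqns d R CV κ μ lam
        (fun s y => P (‖y‖ / Real.sqrt (T - s)))
        (fun s y => ((Real.sqrt (T - s))⁻¹ * U (‖y‖ / Real.sqrt (T - s)) / ‖y‖) • y)
        (fun s y => (T - s)⁻¹ * Θ (‖y‖ / Real.sqrt (T - s))) t x := by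
  intro t ht0 ht x hx
  have hd1 : ∀ {f : ℝ → ℝ} {n : ℕ∞}, 1 ≤ n → ContDiffOn ℝ n f (Ioi 0) →
      ∀ r, 0 < r → HasDerivAt f (deriv f r) r := by
    intro f n hn hf r hr
    have hc : ContDiffAt ℝ n f r := hf.contDiffAt (Ioi_mem_nhds hr)
    exact (hc.differentiableAt (by
      intro h0
      have : n = 0 := by exact_mod_cast h0
      simp [this] at hn)).hasDerivAt
  have hd2 : ∀ {f : ℝ → ℝ}, ContDiffOn ℝ 2 f (Ioi 0) →
      ∀ r, 0 < r → HasDerivAt (deriv f) (deriv (deriv f) r) r := by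
    intro f hf
    have h2 : ContDiffOn ℝ 1 (deriv f) (Ioi 0) :=
      hf.deriv_of_isOpen isOpen_Ioi (by norm_num)
    exact hd1 (n := 1) le_rfl h2
  have hP1 := hd1 (n := 1) le_rfl hP
  have hU1 := hd1 (n := 2) (by norm_num) hU
  have hU2 := hd2 hU
  have hΘ1 := hd1 (n := 2) (by norm_num) hΘ
  have hΘ2 := hd2 hΘ
  have hp : 0 < T - t := by linarith
  obtain ⟨a, ha⟩ : ∃ a, a = √(T - t) := ⟨_, rfl⟩
  have ha0 : 0 < a := ha ▸ Real.sqrt_pos.2 hp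
  have hane : a ≠ 0 := ha0.ne'
  have hTa : T - t = a ^ 2 := by rw [ha, Real.sq_sqrt hp.le]
  have hr : 0 < ‖x‖ := norm_pos_iff.2 hx
  have hrne : ‖x‖ ≠ 0 := hr.ne'
  obtain ⟨z, hz⟩ : ∃ z, z = ‖x‖ / a := ⟨_, rfl⟩
  have hz0 : 0 < z := hz ▸ div_pos hr ha0
  have hzne : z ≠ 0 := hz0.ne'
  have hxz : ‖x‖ = a * z := by rw [hz]; field_simp
  -- spatial profiles at fixed time
  have hsc : ∀ r, HasDerivAt (fun r : ℝ => r / a) (1 / a) r := fun r =>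
    (hasDerivAt_id r).div_const a
  have hcomp : ∀ {f f' : ℝ → ℝ}, (∀ r, 0 < r → HasDerivAt f (f' r) r) →
      ∀ r, 0 < r → HasDerivAt (fun r => f (r / a)) (f' (r / a) * (1 / a)) r := fun h r hr =>
    (h _ (div_pos hr ha0)).comp r (hsc r)
  have hp1 := hcomp hP1
  have hw1 : ∀ r, 0 < r → HasDerivAt (fun r => a⁻¹ * U (r / a) / r)
      ((fun r => a⁻¹ * (deriv U (r / a) * (1 / a)) / r - a⁻¹ * U (r / a) / r ^ 2) r) r := by
    intro r hr
    refine (((hcomp hU1 r hr).const_mul a⁻¹).div (hasDerivAt_id r) hr.ne').congr_deriv ?_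
    have := hr.ne'
    simp only [id]
    field_simp
  have hw2 : ∀ r, 0 < r → HasDerivAt
      (fun r => a⁻¹ * (deriv U (r / a) * (1 / a)) / r - a⁻¹ * U (r / a) / r ^ 2)
      (a⁻¹ * (deriv (deriv U) (r / a) / a ^ 2) / r - 2 * a⁻¹ * (deriv U (r / a) / a) / r ^ 2
        + 2 * a⁻¹ * U (r / a) / r ^ 3) r := by
    intro r hr
    have hne := hr.ne'
    refine (((((hcomp hU2 r hr).mul_const (1 / a)).const_mul a⁻¹).div (hasDerivAt_id r) hr.ne').sub
      (((hcomp hU1 r hr).const_mul a⁻¹).div (hasDerivAt_pow 2 r) (pow_ne_zero 2 hr.ne'))).congr_deriv ?_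
    simp only [id]
    field_simp
    ring
  have hθ1 : ∀ r, 0 < r → HasDerivAt (fun r => (T - t)⁻¹ * Θ (r / a))
      ((fun r => (T - t)⁻¹ * (deriv Θ (r / a) * (1 / a))) r) r := fun r hr =>
    (hcomp hΘ1 r hr).const_mul _
  have hθ2 : ∀ r, 0 < r → HasDerivAt (fun r => (T - t)⁻¹ * (deriv Θ (r / a) * (1 / a)))
      ((T - t)⁻¹ * (deriv (deriv Θ) (r / a) * (1 / a) * (1 / a))) r := fun r hr =>
    ((hcomp hΘ2 r hr).mul_const _).const_mul _
  obtain ⟨o1, o2, o3⟩ := hODE z hz0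
  have PU := (hP1 z hz0).mul (hU1 z hz0)
  have UU := (hU1 z hz0).pow 2
  have PUU := (hP1 z hz0).mul UU
  have PT := (hP1 z hz0).mul (hΘ1 z hz0)
  have EE := (UU.div_const 2).add ((hΘ1 z hz0).const_mul CV)
  have PE := (hP1 z hz0).mul EE
  have UP := (hU1 z hz0).mul (hP1 z hz0)
  have FL := (UP.mul EE).add ((((hU1 z hz0).const_mul R).mul (hP1 z hz0)).mul (hΘ1 z hz0))
  have PU' : deriv (fun s => P s * U s) z = _ := PU.deriv
  have PUU' : deriv (fun s => P s * U s ^ 2) z = _ := PUU.deriv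
  have PT' : deriv (fun s => P s * Θ s) z = _ := PT.deriv
  have PE' : deriv (fun s => P s * (U s ^ 2 / 2 + CV * Θ s)) z = _ := PE.deriv
  have FL' : deriv (fun s => U s * P s * (U s ^ 2 / 2 + CV * Θ s) + R * U s * P s * Θ s) z = _ :=
    FL.deriv
  rw [PU', PUU', PT'] at o2
  rw [PE', FL'] at o3
  clear PU' PUU' PT' PE' FL'
  simp only [Pi.mul_apply, Pi.pow_apply, Pi.add_apply, Nat.cast_ofNat, Nat.add_one_sub_one, Nat.reduceSub, pow_one] at o2 o3
  -- time derivatives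
  have hPz : HasDerivAt P (deriv P z) (‖x‖ / √(T - t)) := by rw [← ha, ← hz]; exact hP1 z hz0
  have hUz : HasDerivAt U (deriv U z) (‖x‖ / √(T - t)) := by rw [← ha, ← hz]; exact hU1 z hz0
  have hΘz : HasDerivAt Θ (deriv Θ z) (‖x‖ / √(T - t)) := by rw [← ha, ← hz]; exact hΘ1 z hz0
  have tP := time_deriv ht hPz
  have tw := ((time_deriv_inv ht).mul (time_deriv ht hUz)).div_const ‖x‖
  have tθ := (time_deriv_inv2 ht).mul (time_deriv ht hΘz)
  have hnorm : ∀ s (y : EuclideanSpace ℝ (Fin d)),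
      ‖((√(T - s))⁻¹ * U (‖y‖ / √(T - s)) / ‖y‖) • y‖ ^ 2
        = ((√(T - s))⁻¹ * U (‖y‖ / √(T - s)) / ‖y‖) ^ 2 * ‖y‖ ^ 2 := by
    intro s y
    rw [norm_smul, mul_pow, Real.norm_eq_abs, sq_abs]
  refine ⟨?_, ?_, ?_⟩
  · have e1 : deriv (fun s => P (‖x‖ / √(T - s))) t = _ := tP.deriv
    have e2 := div_radial hx ((hp1 _ hr).mul (hw1 _ hr))
    simp only [PiLp.smul_apply, smul_eq_mul, ← ha, Pi.mul_apply, mul_assoc] at e1 e2 ⊢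
    rw [e1, e2, ← hz, hxz]
    field_simp
    field_simp at o1
    linear_combination o1
  · intro j
    have e1 : deriv (fun s => P (‖x‖ / √(T - s))
        * ((√(T - s))⁻¹ * U (‖x‖ / √(T - s)) / ‖x‖ * x j)) t = _ :=
      (tP.mul (tw.mul_const (x j))).deriv
    have e2 := div_tensor j hx ((hp1 _ hr).mul ((hw1 _ hr).mul (hw1 _ hr)))
    have e3 := pd_radial j hx (((hp1 _ hr).const_mul R).mul (hθ1 _ hr))
    have e4 := grad_div j hx hw1 (hw2 _ hr)
    have e5 := lap_comp j hx hw1 (hw2 _ hr)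
    have e6 : ∀ i, pd i (fun y => P (‖y‖ / a) * (a⁻¹ * U (‖y‖ / a) / ‖y‖ * y i)
          * (a⁻¹ * U (‖y‖ / a) / ‖y‖ * y j)) x
        = pd i (fun y => P (‖y‖ / a) * ((a⁻¹ * U (‖y‖ / a) / ‖y‖)
          * (a⁻¹ * U (‖y‖ / a) / ‖y‖)) * y i * y j) x := fun i =>
      pd_congr' i hx fun y _ => by ring
    simp only [Pi.mul_apply] at e1 e2 e3 e4 e5
    simp only [PiLp.smul_apply, smul_eq_mul]
    rw [e1]
    simp only [← ha]
    simp only [e6]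
    rw [e2, e3, e4, e5, ← hz, hTa, hxz]
    field_simp
    field_simp at o2
    linear_combination (x j) * o2
  · have e1 : deriv (fun s => P (‖x‖ / √(T - s))
        * (((√(T - s))⁻¹ * U (‖x‖ / √(T - s)) / ‖x‖) ^ 2 * ‖x‖ ^ 2 / 2
          + CV * ((T - s)⁻¹ * Θ (‖x‖ / √(T - s))))) t = _ :=
      (tP.mul ((((tw.pow 2).mul_const (‖x‖ ^ 2)).div_const 2).add (tθ.const_mul CV))).deriv
    have hid := (hasDerivAt_pow 2 ‖x‖)
    have e2 := div_radial hx ((hw1 _ hr).mul (((hp1 _ hr).mul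
      (((((hw1 _ hr).pow 2).mul hid).div_const 2).add ((hθ1 _ hr).const_mul CV))).add
      (((hp1 _ hr).const_mul R).mul (hθ1 _ hr))))
    have e3 := lap_scalar hx hθ1 (hθ2 _ hr)
    have e4 := stress_div lam μ hx hw1 (hw2 _ hr)
    have e6 : ∀ i, pd i (fun y => (a⁻¹ * U (‖y‖ / a) / ‖y‖ * y i) *
          (P (‖y‖ / a) * ((a⁻¹ * U (‖y‖ / a) / ‖y‖) ^ 2 * ‖y‖ ^ 2 / 2
            + CV * ((T - t)⁻¹ * Θ (‖y‖ / a)))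
            + R * P (‖y‖ / a) * ((T - t)⁻¹ * Θ (‖y‖ / a)))) x
        = pd i (fun y => (a⁻¹ * U (‖y‖ / a) / ‖y‖) *
          (P (‖y‖ / a) * ((a⁻¹ * U (‖y‖ / a) / ‖y‖) ^ 2 * ‖y‖ ^ 2 / 2
            + CV * ((T - t)⁻¹ * Θ (‖y‖ / a)))
            + R * P (‖y‖ / a) * ((T - t)⁻¹ * Θ (‖y‖ / a))) * y i) x := fun i =>
      pd_congr' i hx fun y _ => by ring
    simp only [Pi.mul_apply, Pi.add_apply, Pi.pow_apply, Nat.cast_ofNat, Nat.reduceSub, pow_one] at e1 e2 e3 e4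
    simp only [hnorm]
    simp only [PiLp.smul_apply, smul_eq_mul]
    rw [e1]
    simp only [← ha]
    simp only [e6]
    rw [e2, e3, e4, ← hz, hTa, hxz]
    field_simp
    field_simp at o3
    linear_combination o3
end

section
/- (Weighted divergence form of the temperature equation) Let d ≥ 1 and suppose P ∈ C¹((0,∞)) and U, Θ ∈ C²((0,∞)) solve the backward self-similar ODE system, and assume s ↦ P(s)(s/2 + U(s)) is locally integrable on [0,∞). Define Z(r) := (C_V/κ)∫₀^r P(s)(s/2 + U(s)) ds. Then for all r > 0: −κ r^{1−d} ( r^{d−1} e^{−Z(r)} Θ'(r) )' + C_V P Θ e^{−Z(r)} + R P Θ (U' + ((d−1)/r)U) e^{−Z(r)} = [ 2μ((U')² + ((d−1)/r²)U²) + λ(U' + ((d−1)/r)U)² ] e^{−Z(r)}. -/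
open Real Set Filter MeasureTheory

/-- (Weighted divergence form of the temperature equation) -/
theorem temperature_weighted_divergence_form
    (d : ℕ) (hd : 1 ≤ d) (R CV κ μ lam : ℝ)
    (hR : 0 < R) (hCV : 0 < CV) (hκ : 0 < κ) (hμ : 0 < μ)
    (hlam : 0 ≤ 2 * μ + d * lam)
    (P U Θ : ℝ → ℝ)
    (hP : ContDiffOn ℝ 1 P (Ioi 0))
    (hU : ContDiffOn ℝ 2 U (Ioi 0))
    (hΘ : ContDiffOn ℝ 2 Θ (Ioi 0))
    (hODE : BackwardODE d R CV κ μ lam P U Θ)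
    (hloc : ∀ r : ℝ, 0 < r →
      IntervalIntegrable (fun s => P s * (s / 2 + U s)) volume 0 r)
    (Z : ℝ → ℝ)
    (hZ : ∀ r : ℝ, Z r = CV / κ * ∫ s in (0 : ℝ)..r, P s * (s / 2 + U s)) :
    ∀ r : ℝ, 0 < r →
      -κ * r ^ (1 - (d : ℝ)) *
          deriv (fun s => s ^ ((d : ℝ) - 1) * Real.exp (-Z s) * deriv Θ s) r
        + CV * P r * Θ r * Real.exp (-Z r)
        + R * P r * Θ r * (deriv U r + ((d : ℝ) - 1) / r * U r) * Real.exp (-Z r)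
      = (2 * μ * ((deriv U r) ^ 2 + ((d : ℝ) - 1) / r ^ 2 * U r ^ 2)
          + lam * (deriv U r + ((d : ℝ) - 1) / r * U r) ^ 2) * Real.exp (-Z r) := by
  intro r hr
  have hmem : Ioi (0 : ℝ) ∈ nhds r := Ioi_mem_nhds hr
  have hr0 : r ≠ 0 := hr.ne'
  have hPd : HasDerivAt P (deriv P r) r :=
    ((hP.contDiffAt hmem).differentiableAt (by norm_num)).hasDerivAt
  have hUd : HasDerivAt U (deriv U r) r :=
    ((hU.contDiffAt hmem).differentiableAt (by norm_num)).hasDerivAt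
  have hTd : HasDerivAt Θ (deriv Θ r) r :=
    ((hΘ.contDiffAt hmem).differentiableAt (by norm_num)).hasDerivAt
  have hTdd : HasDerivAt (deriv Θ) (deriv (deriv Θ) r) r := by
    have h1 : ContDiffOn ℝ 1 (deriv Θ) (Ioi 0) :=
      ((contDiffOn_succ_iff_deriv_of_isOpen (n := 1) isOpen_Ioi).1
        (by simpa [one_add_one_eq_two] using hΘ)).2.2
    exact ((h1.contDiffAt hmem).differentiableAt (by norm_num)).hasDerivAt
  have hcont : ContinuousOn (fun s => P s * (s / 2 + U s)) (Ioi 0) :=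
    hP.continuousOn.mul ((continuousOn_id.div_const 2).add hU.continuousOn)
  have hZd : HasDerivAt Z (CV / κ * (P r * (r / 2 + U r))) r := by
    have hZ' : Z = fun r => CV / κ * ∫ s in (0 : ℝ)..r, P s * (s / 2 + U s) := funext hZ
    rw [hZ']
    exact (intervalIntegral.integral_hasDerivAt_right (hloc r hr)
      (hcont.stronglyMeasurableAtFilter isOpen_Ioi r hr)
      (hcont.continuousAt hmem)).const_mul _
  have hpow : HasDerivAt (fun s : ℝ => s ^ ((d : ℝ) - 1))
      (((d : ℝ) - 1) * r ^ ((d : ℝ) - 1 - 1)) r :=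
    Real.hasDerivAt_rpow_const (Or.inl hr0)
  have hmain := ((hpow.fun_mul hZd.fun_neg.exp).fun_mul hTdd).deriv
  obtain ⟨e1, e2, e3⟩ := hODE r hr
  have d1 := (hPd.fun_mul hUd).deriv
  have d2 := (hPd.fun_mul (hUd.fun_pow 2)).deriv
  have d3 := (hPd.fun_mul hTd).deriv
  have hE := ((hUd.fun_pow 2).div_const 2).fun_add (hTd.const_mul CV)
  have d4 := (hPd.fun_mul hE).deriv
  have d5 := (((hUd.fun_mul hPd).fun_mul hE).fun_add
    (((hUd.const_mul R).fun_mul hPd).fun_mul hTd)).deriv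
  rw [d1, d2, d3] at e2
  rw [d4, d5] at e3
  rw [hmain, Real.rpow_sub_one hr0 ((d : ℝ) - 1)]
  have hinv : r ^ (1 - (d : ℝ)) * r ^ ((d : ℝ) - 1) = 1 := by
    rw [← Real.rpow_add hr]; simp
  generalize r ^ (1 - (d : ℝ)) = a at *
  generalize r ^ ((d : ℝ) - 1) = b at *
  generalize Real.exp (-Z r) = E at *
  have hk : κ * (CV / κ) = CV := by field_simp
  generalize CV / κ = q at *
  generalize deriv (deriv U) r = U2 at *
  generalize deriv (deriv Θ) r = T2 at *
  generalize deriv Θ r = T1 at *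
  generalize deriv U r = U1 at *
  generalize deriv P r = P1 at *
  norm_num at e1 e2 e3
  linear_combination E * (e3 - U r * e2 - (CV * Θ r - U r ^ 2 / 2) * e1)
    + (-κ * E * (((d : ℝ) - 1) / r * T1 + T2 - q * (P r * (r / 2 + U r)) * T1)) * hinv
    + E * (P r * (r / 2 + U r)) * T1 * hk
end

section
/- (Total energy divergence identity) Let d ≥ 1 and suppose P ∈ C¹((0,∞)) and U, Θ ∈ C²((0,∞)) solve the backward self-similar ODE system. Then for all r > 0: P(C_VΘ + U²/2) + P(r/2 + U)(C_VΘ + U²/2)' + (R P Θ U)' + ((d−1)/r)R P Θ U − κ(Θ'' + ((d−1)/r)Θ') − (2μ+λ)[ (U²/2)'' + ((d−1)/r)(U²/2)' ] = λ[ ( (d−1)U²/r )' + ((d−1)²/r²)U² ], where primes denote derivatives in r. -/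
open Real Set Filter MeasureTheory

/-- (Total energy divergence identity) -/
theorem total_energy_divergence_identity
    (d : ℕ) (hd : 1 ≤ d) (R CV κ μ lam : ℝ)
    (hR : 0 < R) (hCV : 0 < CV) (hκ : 0 < κ) (hμ : 0 < μ)
    (hlam : 0 ≤ 2 * μ + d * lam)
    (P U Θ : ℝ → ℝ)
    (hP : ContDiffOn ℝ 1 P (Ioi 0))
    (hU : ContDiffOn ℝ 2 U (Ioi 0))
    (hΘ : ContDiffOn ℝ 2 Θ (Ioi 0))
    (hODE : BackwardODE d R CV κ μ lam P U Θ) :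
    ∀ r : ℝ, 0 < r →
      P r * (CV * Θ r + U r ^ 2 / 2)
        + P r * (r / 2 + U r) * deriv (fun s => CV * Θ s + U s ^ 2 / 2) r
        + deriv (fun s => R * P s * Θ s * U s) r
        + ((d : ℝ) - 1) / r * (R * P r * Θ r * U r)
        - κ * (deriv (deriv Θ) r + ((d : ℝ) - 1) / r * deriv Θ r)
        - (2 * μ + lam) *
            (deriv (deriv (fun s => U s ^ 2 / 2)) r
              + ((d : ℝ) - 1) / r * deriv (fun s => U s ^ 2 / 2) r)
      = lam * (deriv (fun s => ((d : ℝ) - 1) * U s ^ 2 / s) r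
          + ((d : ℝ) - 1) ^ 2 / r ^ 2 * U r ^ 2) := by
  intro r hr
  obtain ⟨h1, -, h3⟩ := hODE r hr
  have hn : Ioi (0:ℝ) ∈ nhds r := Ioi_mem_nhds hr
  have dP : HasDerivAt P (deriv P r) r :=
    ((hP.contDiffAt hn).differentiableAt (by norm_num)).hasDerivAt
  have dUs : ∀ s : ℝ, 0 < s → HasDerivAt U (deriv U s) s := fun s hs =>
    ((hU.contDiffAt (Ioi_mem_nhds hs)).differentiableAt (by norm_num)).hasDerivAt
  have dU := dUs r hr
  have dΘ : HasDerivAt Θ (deriv Θ r) r :=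
    ((hΘ.contDiffAt hn).differentiableAt (by norm_num)).hasDerivAt
  have ddU : HasDerivAt (deriv U) (deriv (deriv U) r) r := by
    have h : ContDiffOn ℝ 1 (deriv U) (Ioi 0) :=
      ((contDiffOn_succ_iff_deriv_of_isOpen (n := 1) isOpen_Ioi).1
        (by simpa [one_add_one_eq_two] using hU)).2.2
    exact ((h.contDiffAt hn).differentiableAt (by norm_num)).hasDerivAt
  have hsq : ∀ s : ℝ, 0 < s → HasDerivAt (fun s => U s ^ 2 / 2) (U s * deriv U s) s := by
    intro s hs
    refine (((dUs s hs).fun_pow 2).div_const 2).congr_deriv ?_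
    norm_num
    ring
  have hq := hsq r hr
  have e1 := ((dΘ.const_mul CV).fun_add hq).deriv
  have e2 := (((dP.const_mul R).fun_mul dΘ).fun_mul dU).deriv
  have e3 : deriv (deriv (fun s => U s ^ 2 / 2)) r
      = deriv U r * deriv U r + U r * deriv (deriv U) r := by
    have he : deriv (fun s => U s ^ 2 / 2) =ᶠ[nhds r] fun s => U s * deriv U s := by
      filter_upwards [hn] with s hs using (hsq s hs).deriv
    rw [he.deriv_eq, (dU.fun_mul ddU).deriv]
  have e4 := (((dU.fun_pow 2).const_mul ((d : ℝ) - 1)).fun_div (hasDerivAt_id' r) hr.ne').deriv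
  have dE := hq.fun_add (dΘ.const_mul CV)
  have e5 := (dP.fun_mul dE).deriv
  have e6 := (((dU.fun_mul dP).fun_mul dE).fun_add
    (((dU.const_mul R).fun_mul dP).fun_mul dΘ)).deriv
  rw [e1, e2, e3, e4, hq.deriv]
  rw [e5, e6] at h3
  have hi : r * r⁻¹ = 1 := mul_inv_cancel₀ hr.ne'
  have e7 : (((d : ℝ) - 1) * (((2 : ℕ) : ℝ) * U r ^ (2 - 1) * deriv U r) * r
      - ((d : ℝ) - 1) * U r ^ 2 * 1) / r ^ 2
      = 2 * ((d : ℝ) - 1) / r * (U r * deriv U r) - ((d : ℝ) - 1) / r ^ 2 * U r ^ 2 := by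
    field_simp
    norm_num
    ring
  rw [e7]
  linear_combination h3 - (U r ^ 2 / 2 + CV * Θ r) * h1
end
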